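/- Let A be a real m×n matrix with rows a_1,…,a_m and b ∈ ℝ^m, and let V = {v ∈ ℝ^n : A v ≥ b}. Suppose that for some c ∈ ℝ^n the set of minimizers of v ↦ c · v over V is a singleton {v*}. Then {v ∈ V : a_j · v = b_j for every j with a_j · v* = b_j} = {v*}; that is, the face of V determined by the full set of constraints active at the unique minimizer is the singleton {v*}. -/

import Mathlib

open Matrix Set BigOperators

/-!
A unique minimizer of a linear functional over a set is an extreme point of that set. Suppose `x` is
an extreme point of the polyhedron `{v | b ≤ a v}` and `v` lies on the face cut out by the
constraints active at `x`. Those constraints are constant along the line through `v` and `x`, and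
the finitely many others have slack at `x`, so the segment from `v` to `x` can be prolonged beyond
`x` inside the polyhedron. Then `x` lies strictly between `v` and a feasible point, so `v = x`.
-/

theorem isExposed_setOf_forall_le {𝕜 E : Type*} [TopologicalSpace 𝕜] [Ring 𝕜] [PartialOrder 𝕜]
    [IsOrderedAddMonoid 𝕜] [IsTopologicalAddGroup 𝕜] [AddCommGroup E] [TopologicalSpace E]
    [Module 𝕜 E] (l : StrongDual 𝕜 E) (S : Set E) : IsExposed 𝕜 S {v ∈ S | ∀ w ∈ S, l v ≤ l w} := by
  refine fun _ => ⟨-l, ?_⟩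
  simp only [_root_.neg_apply, neg_le_neg_iff]

section OrderedField

variable {K E ι : Type*} [Field K] [LinearOrder K] [IsStrictOrderedRing K]

theorem exists_pos_forall_le_add_mul {r s : K} (h : r < s) (d : K) :
    ∃ ε > 0, ∀ t, 0 ≤ t → t ≤ ε → r ≤ s + t * d := by
  obtain ⟨ε, hε, hlt⟩ := exists_pos_mul_lt (sub_pos.2 h) |d|
  refine ⟨ε, hε, fun t ht htε => ?_⟩
  have hstep : |t * d| ≤ |d| * ε := by
    rw [abs_mul, abs_of_nonneg ht, mul_comm]
    gcongr
  linarith [neg_abs_le (t * d)]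

theorem exists_pos_le_add_smul [Finite ι] {b s d : ι → K} (hs : b ≤ s)
    (hd : ∀ i, s i = b i → 0 ≤ d i) : ∃ t > (0 : K), b ≤ s + t • d := by
  have hbound : ∀ i, ∃ ε : Ioi (0 : K), ∀ t : K, 0 ≤ t → t ≤ ε → b i ≤ s i + t * d i := by
    intro i
    rcases (hs i).eq_or_lt with hactive | hslack
    · exact ⟨⟨1, one_pos⟩, fun t ht _ =>
        (hs i).trans (le_add_of_nonneg_right (mul_nonneg ht (hd i hactive.symm)))⟩
    · obtain ⟨ε, hε, h⟩ := exists_pos_forall_le_add_mul hslack (d i)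
      exact ⟨⟨ε, hε⟩, h⟩
  choose ε hε using hbound
  obtain ⟨⟨t, ht⟩, htε⟩ := Finite.exists_ge ε
  exact ⟨t, ht, fun i => hε i t (le_of_lt ht) (htε i)⟩

variable [AddCommGroup E] [Module K E]

theorem mem_openSegment_add_smul_sub (v x : E) {t : K} (ht : 0 < t) :
    x ∈ openSegment K v (x + t • (x - v)) := by
  refine ⟨t / (1 + t), 1 / (1 + t), by positivity, by positivity, by field_simp; ring, ?_⟩
  match_scalars
  all_goals field_simp
  ring

theorem stmt_12_general [Finite ι] (a : E →ₗ[K] ι → K) (b : ι → K) {x : E}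
    (hx : x ∈ extremePoints K {v | b ≤ a v}) :
    {v | b ≤ a v ∧ ∀ i, a x i = b i → a v i = b i} = {x} := by
  refine Subset.antisymm ?_ (singleton_subset_iff.2 ⟨hx.1, fun _ h => h⟩)
  rintro v ⟨hv, hactive⟩
  have hslope : ∀ i, a x i = b i → 0 ≤ a (x - v) i := fun i hi => by
    rw [map_sub, Pi.sub_apply, hi, hactive i hi, sub_self]
  obtain ⟨t, ht, hfeasible⟩ := exists_pos_le_add_smul hx.1 hslope
  rw [← map_smul, ← map_add] at hfeasible
  exact hx.2 hv hfeasible (mem_openSegment_add_smul_sub v x ht)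

end OrderedField

theorem stmt_12 (m n : ℕ)
    (A : Matrix (Fin m) (Fin n) ℝ) (b : Fin m → ℝ)
    (c : Fin n → ℝ) (vstar : Fin n → ℝ)
    (huniq : {v | b ≤ A.mulVec v ∧ ∀ w, b ≤ A.mulVec w → c ⬝ᵥ v ≤ c ⬝ᵥ w} = {vstar}) :
    {v | b ≤ A.mulVec v ∧ ∀ j, A j ⬝ᵥ vstar = b j → A j ⬝ᵥ v = b j} = {vstar} := by
  have hexposed := isExposed_setOf_forall_le (dotProductBilin ℝ ℝ c).toContinuousLinearMap
    {v | b ≤ A.mulVecLin v}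
  exact stmt_12_general A.mulVecLin b (huniq ▸ hexposed).isExtreme.mem_extremePoints
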